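/- For all integers k ≥ 1 and j ≥ 0, the function a_{k,j} − ((k+j)!/k!) · zψ n_{k+j} /(−2iρ)^{j+2} is independent of all n_ℓ with ℓ ≥ k+j; that is, if two refraction indices n, ñ satisfy n_m = ñ_m on Γ for all 0 ≤ m ≤ k+j−1, then a_{k,j} − ((k+j)!/k!) zψ n_{k+j}/(−2iρ)^{j+2} = ã'_{k,j} − ((k+j)!/k!) zψ ñ_{k+j}/(−2iρ)^{j+2}, where ã'_{k,j} are the amplitude coefficients built from ñ. -/

import Mathlib

/- Setting: normal coordinates near the boundary; the chart of Γ is modelled by ℝ^n.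
Data: Taylor coefficients `R_ℓ` of the metric matrix, boundary Taylor coefficients
`n_k` of the refraction index, `ρ = √(−r₀ + z n₀)` with `Im ρ > 0`.  `φ_k` solve the
eikonal recursion (3.12) with `φ₀ = −⟨x',ξ'⟩`, `φ₁ = ρ`, while `φ̃_k` solve the free
(n-independent) recursion (3.16) with `φ̃₀ = −⟨x',ξ'⟩`, `φ̃₁ = i√r₀`.
`η = φ₀(r₀/δ₀)` is the cutoff near `ξ' = 0`. -/

noncomputable section

/-- Square root with nonnegative imaginary part. -/
def ssqrt (w : ℂ) : ℂ :=
  if 0 ≤ (w ^ (1 / 2 : ℂ)).im then w ^ (1 / 2 : ℂ) else -(w ^ (1 / 2 : ℂ))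

/-- `z ∈ Z₁ ∪ Z₂ ∪ Z₃`. -/
def Zall (z : ℂ) : Prop :=
  (z.re = 1 ∧ 0 < |z.im| ∧ |z.im| ≤ 1) ∨ (z.re = -1 ∧ |z.im| ≤ 1) ∨
    (|z.re| ≤ 1 ∧ |z.im| = 1)

variable (n : ℕ)

/-- The `i`-th coordinate vector of `ℝ^n`. -/
def ev (i : Fin n) : EuclideanSpace ℝ (Fin n) := EuclideanSpace.single i (1 : ℝ)

/-- Derivative of a symbol in the base (`x'`) direction `v`. -/
def Dx (f : (EuclideanSpace ℝ (Fin n)) × (EuclideanSpace ℝ (Fin n)) → ℂ)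
    (p : (EuclideanSpace ℝ (Fin n)) × (EuclideanSpace ℝ (Fin n)))
    (v : EuclideanSpace ℝ (Fin n)) : ℂ :=
  fderiv ℝ f p (v, 0)

/-- `⟨R_ℓ ∇_{x'} f, ∇_{x'} g⟩`. -/
def RPair (Rℓ : EuclideanSpace ℝ (Fin n) → (EuclideanSpace ℝ (Fin n) →L[ℝ] EuclideanSpace ℝ (Fin n)))
    (f g : (EuclideanSpace ℝ (Fin n)) × (EuclideanSpace ℝ (Fin n)) → ℂ)
    (p : (EuclideanSpace ℝ (Fin n)) × (EuclideanSpace ℝ (Fin n))) : ℂ :=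
  ∑ a : Fin n, ∑ b : Fin n,
    ((inner ℝ (Rℓ p.1 (ev n a)) (ev n b) : ℝ) : ℂ) * Dx n f p (ev n a) * Dx n g p (ev n b)

/-- The eikonal recursion (3.12) (with right-hand side `z n_K`). -/
def EikonalRec
    (Rk : ℕ → EuclideanSpace ℝ (Fin n) → (EuclideanSpace ℝ (Fin n) →L[ℝ] EuclideanSpace ℝ (Fin n)))
    (nk : ℕ → EuclideanSpace ℝ (Fin n) → ℝ) (z : ℂ)
    (φ : ℕ → (EuclideanSpace ℝ (Fin n)) × (EuclideanSpace ℝ (Fin n)) → ℂ) : Prop :=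
  ∀ K : ℕ, ∀ p,
    (∑ k ∈ Finset.range (K + 1),
      (((k + 1) * (K - k + 1) : ℕ) : ℂ) * φ (k + 1) p * φ (K - k + 1) p) +
    (∑ ℓ ∈ Finset.range (K + 1), ∑ k ∈ Finset.range (K + 1 - ℓ),
      RPair n (Rk ℓ) (φ k) (φ (K - ℓ - k)) p) = z * (nk K p.1 : ℂ)

/-- The free eikonal recursion (3.16) (right-hand side `0`). -/
def FreeEikonalRec
    (Rk : ℕ → EuclideanSpace ℝ (Fin n) → (EuclideanSpace ℝ (Fin n) →L[ℝ] EuclideanSpace ℝ (Fin n)))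
    (φ : ℕ → (EuclideanSpace ℝ (Fin n)) × (EuclideanSpace ℝ (Fin n)) → ℂ) : Prop :=
  ∀ K : ℕ, ∀ p,
    (∑ k ∈ Finset.range (K + 1),
      (((k + 1) * (K - k + 1) : ℕ) : ℂ) * φ (k + 1) p * φ (K - k + 1) p) +
    (∑ ℓ ∈ Finset.range (K + 1), ∑ k ∈ Finset.range (K + 1 - ℓ),
      RPair n (Rk ℓ) (φ k) (φ (K - ℓ - k)) p) = 0

/-- `ρ = √(−⟨R₀(x')ξ',ξ'⟩ + z n₀(x'))`, branch with `Im ρ > 0`. -/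
def rho
    (R₀ : EuclideanSpace ℝ (Fin n) → (EuclideanSpace ℝ (Fin n) →L[ℝ] EuclideanSpace ℝ (Fin n)))
    (n₀ : EuclideanSpace ℝ (Fin n) → ℝ) (z : ℂ)
    (p : (EuclideanSpace ℝ (Fin n)) × (EuclideanSpace ℝ (Fin n))) : ℂ :=
  ssqrt (-((inner ℝ (R₀ p.1 p.2) p.2 : ℝ) : ℂ) + z * (n₀ p.1 : ℂ))

/-- Mixed derivative `∂_{x'}^α ∂_{ξ'}^β a` evaluated on directions `v`, `w`. -/
def Dmix (a : (EuclideanSpace ℝ (Fin n)) × (EuclideanSpace ℝ (Fin n)) → ℂ) (α β : ℕ)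
    (v : Fin α → EuclideanSpace ℝ (Fin n)) (w : Fin β → EuclideanSpace ℝ (Fin n))
    (p : (EuclideanSpace ℝ (Fin n)) × (EuclideanSpace ℝ (Fin n))) : ℂ :=
  iteratedFDeriv ℝ (α + β) a p
    (Fin.append (fun i => ((v i), (0 : EuclideanSpace ℝ (Fin n))))
      (fun i => ((0 : EuclideanSpace ℝ (Fin n)), w i)))

/-- The Japanese bracket `⟨ξ'⟩`. -/
def jap {n : ℕ} (ξ : EuclideanSpace ℝ (Fin n)) : ℝ := Real.sqrt (1 + ‖ξ‖ ^ 2)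


/-- Second derivative of a symbol in base directions `v, w`. -/
def Dxx (f : (EuclideanSpace ℝ (Fin n)) × (EuclideanSpace ℝ (Fin n)) → ℂ)
    (p : (EuclideanSpace ℝ (Fin n)) × (EuclideanSpace ℝ (Fin n)))
    (v w : EuclideanSpace ℝ (Fin n)) : ℂ :=
  fderiv ℝ (fun q => fderiv ℝ f q ((v, 0) :
    (EuclideanSpace ℝ (Fin n)) × (EuclideanSpace ℝ (Fin n)))) p (w, 0)

/-- `⟨R_ℓ ∇_{x'}·, ∇_{x'}f⟩ = ∑_{a,b} (R_ℓ)_{ab} ∂_a ∂_b f` (the second-order part). -/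
def TrR (Rℓ : EuclideanSpace ℝ (Fin n) → (EuclideanSpace ℝ (Fin n) →L[ℝ] EuclideanSpace ℝ (Fin n)))
    (f : (EuclideanSpace ℝ (Fin n)) × (EuclideanSpace ℝ (Fin n)) → ℂ)
    (p : (EuclideanSpace ℝ (Fin n)) × (EuclideanSpace ℝ (Fin n))) : ℂ :=
  ∑ a : Fin n, ∑ b : Fin n,
    ((inner ℝ (Rℓ p.1 (ev n a)) (ev n b) : ℝ) : ℂ) * Dxx n f p (ev n a) (ev n b)

/-- The coefficient `φ_k^Δ` of `x₁^k` in the Taylor expansion of `Δφ`: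
`φ_k^Δ = (k+1)(k+2)φ_{k+2} + ∑_{ℓ+ν=k} (⟨R_ℓ∇·,∇φ_ν⟩ + q_ℓ^♯(ν+1)φ_{ν+1} + ⟨q_ℓ^♭,∇φ_ν⟩)`. -/
def phiDel
    (Rk : ℕ → EuclideanSpace ℝ (Fin n) → (EuclideanSpace ℝ (Fin n) →L[ℝ] EuclideanSpace ℝ (Fin n)))
    (qs : ℕ → EuclideanSpace ℝ (Fin n) → ℝ)
    (qf : ℕ → EuclideanSpace ℝ (Fin n) → EuclideanSpace ℝ (Fin n))
    (φ : ℕ → (EuclideanSpace ℝ (Fin n)) × (EuclideanSpace ℝ (Fin n)) → ℂ) (k : ℕ)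
    (p : (EuclideanSpace ℝ (Fin n)) × (EuclideanSpace ℝ (Fin n))) : ℂ :=
  (((k + 1) * (k + 2) : ℕ) : ℂ) * φ (k + 2) p +
    ∑ ℓ ∈ Finset.range (k + 1),
      (TrR n (Rk ℓ) (φ (k - ℓ)) p +
        ((qs ℓ p.1 : ℝ) : ℂ) * (((k - ℓ + 1 : ℕ) : ℕ) : ℂ) * φ (k - ℓ + 1) p +
        Dx n (φ (k - ℓ)) p (qf ℓ p.1))

/-- The coefficient `a_{k,j}^Δ` of `x₁^k` in the Taylor expansion of `Δ a_j`. -/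
def aDel
    (Rk : ℕ → EuclideanSpace ℝ (Fin n) → (EuclideanSpace ℝ (Fin n) →L[ℝ] EuclideanSpace ℝ (Fin n)))
    (qs : ℕ → EuclideanSpace ℝ (Fin n) → ℝ)
    (qf : ℕ → EuclideanSpace ℝ (Fin n) → EuclideanSpace ℝ (Fin n))
    (a : ℕ → ℕ → (EuclideanSpace ℝ (Fin n)) × (EuclideanSpace ℝ (Fin n)) → ℂ) (k j : ℕ)
    (p : (EuclideanSpace ℝ (Fin n)) × (EuclideanSpace ℝ (Fin n))) : ℂ :=
  (((k + 1) * (k + 2) : ℕ) : ℂ) * a (k + 2) j p +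
    ∑ ℓ ∈ Finset.range (k + 1),
      (TrR n (Rk ℓ) (a (k - ℓ) j) p +
        ((qs ℓ p.1 : ℝ) : ℂ) * (((k - ℓ + 1 : ℕ) : ℕ) : ℂ) * a (k - ℓ + 1) j p +
        Dx n (a (k - ℓ) j) p (qf ℓ p.1))

/-- The transport recursion (3.18):
`∑_{k₁+k₂=k} 2i(k₁+1)(k₂+1)φ_{k₁+1}a_{k₂+1,j} + ∑_{k₁+k₂+k₃=k} 2i⟨R_{k₁}∇φ_{k₂},∇a_{k₃,j}⟩`
`+ ∑_{k₁+k₂=k} iφ_{k₁}^Δ a_{k₂,j} = −a_{k,j−1}^Δ`  (with `a_{k,−1} = 0`). -/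
def TransportRec
    (Rk : ℕ → EuclideanSpace ℝ (Fin n) → (EuclideanSpace ℝ (Fin n) →L[ℝ] EuclideanSpace ℝ (Fin n)))
    (qs : ℕ → EuclideanSpace ℝ (Fin n) → ℝ)
    (qf : ℕ → EuclideanSpace ℝ (Fin n) → EuclideanSpace ℝ (Fin n))
    (φ : ℕ → (EuclideanSpace ℝ (Fin n)) × (EuclideanSpace ℝ (Fin n)) → ℂ)
    (a : ℕ → ℕ → (EuclideanSpace ℝ (Fin n)) × (EuclideanSpace ℝ (Fin n)) → ℂ) : Prop :=
  ∀ j k : ℕ, ∀ p,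
    (∑ k₁ ∈ Finset.range (k + 1), 2 * Complex.I *
      (((k₁ + 1) * (k - k₁ + 1) : ℕ) : ℂ) * φ (k₁ + 1) p * a (k - k₁ + 1) j p) +
    (∑ k₁ ∈ Finset.range (k + 1), ∑ k₂ ∈ Finset.range (k + 1 - k₁), 2 * Complex.I *
      RPair n (Rk k₁) (φ k₂) (a (k - k₁ - k₂) j) p) +
    (∑ k₁ ∈ Finset.range (k + 1), Complex.I * phiDel n Rk qs qf φ k₁ p *
      a (k - k₁) j p) =
    (if j = 0 then 0 else -aDel n Rk qs qf a k (j - 1) p)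

/- Where two solutions agree in all lower coefficients, subtracting the recursions leaves only the
leading terms. The eikonal recursion gives `2(k+1)ρ (φ_{k+1} − φ'_{k+1}) = z (n_k − n'_k)`, and with
`D_{k,j} = a_{k,j} − a'_{k,j}` the transport recursion gives
`−2iρ D_{k,0} = i(k+1) ψ (φ_{k+1} − φ'_{k+1})` and `−2iρ D_{k,j+1} = (k+1) D_{k+1,j}`.
Iterating the last relation produces the factor `(k+j)!/k! · (−2iρ)^{−j}`. None of this depends on
what the tangential operators are, only on which coefficients they act on. -/
section FormalRecursion

variable {X : Type*} {B : ℕ → (X → ℂ) → (X → ℂ) → X → ℂ}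
  {L : ℕ → ℕ → (X → ℂ) → (X → ℂ) → X → ℂ}

/-- The `x₁^K`-coefficient of `(∂_{x₁}φ)² + ⟨R∇_{x'}φ, ∇_{x'}φ⟩` for a formal power series
`φ = ∑ x₁^k φ_k`, with arbitrary operations `B ℓ` in the role of `⟨R_ℓ∇·, ∇·⟩`. -/
def eikonalCoeff (B : ℕ → (X → ℂ) → (X → ℂ) → X → ℂ) (φ : ℕ → X → ℂ) (K : ℕ) (p : X) : ℂ :=
  (∑ k ∈ Finset.range (K + 1), (((k + 1) * (K - k + 1) : ℕ) : ℂ) * φ (k + 1) p * φ (K - k + 1) p) +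
    ∑ ℓ ∈ Finset.range (K + 1), ∑ k ∈ Finset.range (K + 1 - ℓ), B ℓ (φ k) (φ (K - ℓ - k)) p

/-- The `x₁^k`-coefficient of `Δf` for a formal power series `f = ∑ x₁^k f_k`. The term
`L ℓ ν f_ν f_{ν+1}` stands for the whole contribution of the `ℓ`-th Taylor coefficients of `R` and
`q`, namely `⟨R_ℓ∇·, ∇f_ν⟩ + q_ℓ^♯ (ν+1) f_{ν+1} + ⟨q_ℓ^♭, ∇f_ν⟩`. -/
def laplaceCoeff (L : ℕ → ℕ → (X → ℂ) → (X → ℂ) → X → ℂ) (f : ℕ → X → ℂ) (k : ℕ) (p : X) : ℂ :=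
  (((k + 1) * (k + 2) : ℕ) : ℂ) * f (k + 2) p +
    ∑ ℓ ∈ Finset.range (k + 1), L ℓ (k - ℓ) (f (k - ℓ)) (f (k - ℓ + 1)) p

/-- The `x₁^k`-coefficient of `2i ∂_{x₁}φ ∂_{x₁}b + 2i⟨R∇_{x'}φ, ∇_{x'}b⟩ + i(Δφ)b` for formal power
series `φ`, `b`: the left-hand side of the transport recursion, in the notation of `eikonalCoeff`
and `laplaceCoeff`. -/
def transportCoeff (B : ℕ → (X → ℂ) → (X → ℂ) → X → ℂ)
    (L : ℕ → ℕ → (X → ℂ) → (X → ℂ) → X → ℂ) (φ b : ℕ → X → ℂ) (k : ℕ) (p : X) : ℂ :=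
  (∑ k₁ ∈ Finset.range (k + 1),
    2 * Complex.I * (((k₁ + 1) * (k - k₁ + 1) : ℕ) : ℂ) * φ (k₁ + 1) p * b (k - k₁ + 1) p) +
  (∑ k₁ ∈ Finset.range (k + 1), ∑ k₂ ∈ Finset.range (k + 1 - k₁),
    2 * Complex.I * B k₁ (φ k₂) (b (k - k₁ - k₂)) p) +
  ∑ k₁ ∈ Finset.range (k + 1), Complex.I * laplaceCoeff L φ k₁ p * b (k - k₁) p

section LeadingTerms

variable {φ φ' : ℕ → X → ℂ}

theorem eikonalCoeff_succ (φ : ℕ → X → ℂ) (K : ℕ) (p : X) :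
    eikonalCoeff B φ (K + 1) p = 2 * (K + 2) * φ 1 p * φ (K + 2) p +
      (∑ k ∈ Finset.range K, (((k + 2) * (K - k + 1) : ℕ) : ℂ) * φ (k + 2) p * φ (K - k + 1) p) +
      ∑ ℓ ∈ Finset.range (K + 2), ∑ k ∈ Finset.range (K + 2 - ℓ),
        B ℓ (φ k) (φ (K + 1 - ℓ - k)) p := by
  rw [eikonalCoeff, Finset.sum_range_succ, Finset.sum_range_succ']
  simp only [Nat.add_sub_add_right, Nat.sub_self, Nat.sub_zero, zero_add, add_assoc,
    Nat.reduceAdd]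
  push_cast
  ring

theorem eikonalCoeff_sub {K : ℕ} (h : ∀ m ≤ K + 1, φ m = φ' m) (p : X) :
    eikonalCoeff B φ (K + 1) p - eikonalCoeff B φ' (K + 1) p =
      2 * (K + 2) * φ 1 p * (φ (K + 2) p - φ' (K + 2) p) := by
  have tangential : ∀ ℓ ∈ Finset.range (K + 2), ∀ k ∈ Finset.range (K + 2 - ℓ),
      B ℓ (φ k) (φ (K + 1 - ℓ - k)) p = B ℓ (φ' k) (φ' (K + 1 - ℓ - k)) p := by
    intro ℓ hℓ k hk
    rw [Finset.mem_range] at hℓ hk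
    rw [h k (by omega), h (K + 1 - ℓ - k) (by omega)]
  have normal : ∀ k ∈ Finset.range K,
      (((k + 2) * (K - k + 1) : ℕ) : ℂ) * φ (k + 2) p * φ (K - k + 1) p =
        (((k + 2) * (K - k + 1) : ℕ) : ℂ) * φ' (k + 2) p * φ' (K - k + 1) p := by
    intro k hk
    rw [Finset.mem_range] at hk
    rw [h (k + 2) (by omega), h (K - k + 1) (by omega)]
  rw [eikonalCoeff_succ, eikonalCoeff_succ, Finset.sum_congr rfl normal,
    Finset.sum_congr rfl fun ℓ hℓ => Finset.sum_congr rfl (tangential ℓ hℓ), ← h 1 (by omega)]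
  ring

theorem laplaceCoeff_sub {f g : ℕ → X → ℂ} {k : ℕ} (h : ∀ m ≤ k + 1, f m = g m) (p : X) :
    laplaceCoeff L f k p - laplaceCoeff L g k p =
      (k + 1) * (k + 2) * (f (k + 2) p - g (k + 2) p) := by
  have lower : ∀ ℓ ∈ Finset.range (k + 1),
      L ℓ (k - ℓ) (f (k - ℓ)) (f (k - ℓ + 1)) p = L ℓ (k - ℓ) (g (k - ℓ)) (g (k - ℓ + 1)) p := by
    intro ℓ _
    rw [h (k - ℓ) (by omega), h (k - ℓ + 1) (by omega)]
  rw [laplaceCoeff, laplaceCoeff, Finset.sum_congr rfl lower]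
  push_cast
  ring

theorem laplaceCoeff_congr {f g : ℕ → X → ℂ} {k : ℕ} (h : ∀ m ≤ k + 2, f m = g m) (p : X) :
    laplaceCoeff L f k p = laplaceCoeff L g k p := by
  rw [← sub_eq_zero, laplaceCoeff_sub (fun m hm => h m (by omega)), h (k + 2) le_rfl, sub_self,
    mul_zero]

theorem transportCoeff_eq (φ b : ℕ → X → ℂ) (k : ℕ) (p : X) :
    transportCoeff B L φ b k p = 2 * Complex.I * (k + 1) * φ 1 p * b (k + 1) p +
      Complex.I * laplaceCoeff L φ k p * b 0 p +
      (∑ k₁ ∈ Finset.range k, 2 * Complex.I *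
        (((k₁ + 2) * (k - (k₁ + 1) + 1) : ℕ) : ℂ) * φ (k₁ + 2) p * b (k - (k₁ + 1) + 1) p) +
      (∑ k₁ ∈ Finset.range (k + 1), ∑ k₂ ∈ Finset.range (k + 1 - k₁),
        2 * Complex.I * B k₁ (φ k₂) (b (k - k₁ - k₂)) p) +
      ∑ k₁ ∈ Finset.range k, Complex.I * laplaceCoeff L φ k₁ p * b (k - k₁) p := by
  rw [transportCoeff, Finset.sum_range_succ',
    Finset.sum_range_succ fun k₁ => Complex.I * laplaceCoeff L φ k₁ p * b (k - k₁) p]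
  simp only [Nat.sub_self, Nat.sub_zero, zero_add, add_assoc, Nat.reduceAdd]
  push_cast
  ring

theorem transportCoeff_sub {b b' : ℕ → X → ℂ} {k : ℕ} (hφ : ∀ m ≤ k + 1, φ m = φ' m)
    (hb : ∀ m ≤ k, b m = b' m) (p : X) :
    transportCoeff B L φ b k p - transportCoeff B L φ' b' k p =
      2 * Complex.I * (k + 1) * φ 1 p * (b (k + 1) p - b' (k + 1) p) +
        Complex.I * (k + 1) * (k + 2) * (φ (k + 2) p - φ' (k + 2) p) * b 0 p := by
  have normal : ∀ k₁ ∈ Finset.range k,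
      2 * Complex.I * (((k₁ + 2) * (k - (k₁ + 1) + 1) : ℕ) : ℂ) * φ (k₁ + 2) p *
          b (k - (k₁ + 1) + 1) p =
        2 * Complex.I * (((k₁ + 2) * (k - (k₁ + 1) + 1) : ℕ) : ℂ) * φ' (k₁ + 2) p *
          b' (k - (k₁ + 1) + 1) p := by
    intro k₁ hk₁
    rw [Finset.mem_range] at hk₁
    rw [hφ (k₁ + 2) (by omega), hb (k - (k₁ + 1) + 1) (by omega)]
  have tangential : ∀ k₁ ∈ Finset.range (k + 1), ∀ k₂ ∈ Finset.range (k + 1 - k₁),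
      2 * Complex.I * B k₁ (φ k₂) (b (k - k₁ - k₂)) p =
        2 * Complex.I * B k₁ (φ' k₂) (b' (k - k₁ - k₂)) p := by
    intro k₁ hk₁ k₂ hk₂
    rw [Finset.mem_range] at hk₁ hk₂
    rw [hφ k₂ (by omega), hb (k - k₁ - k₂) (by omega)]
  have zeroth_order : ∀ k₁ ∈ Finset.range k,
      Complex.I * laplaceCoeff L φ k₁ p * b (k - k₁) p =
        Complex.I * laplaceCoeff L φ' k₁ p * b' (k - k₁) p := by
    intro k₁ hk₁
    rw [Finset.mem_range] at hk₁
    rw [laplaceCoeff_congr fun m hm => hφ m (by omega), hb (k - k₁) (by omega)]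
  rw [transportCoeff_eq, transportCoeff_eq, Finset.sum_congr rfl normal,
    Finset.sum_congr rfl fun k₁ hk₁ => Finset.sum_congr rfl (tangential k₁ hk₁),
    Finset.sum_congr rfl zeroth_order, ← hφ 1 (by omega), ← hb 0 (by omega)]
  linear_combination Complex.I * b 0 p * laplaceCoeff_sub (L := L) hφ p

theorem neg_two_I_mul_sub_of_transportCoeff_sub {b b' : ℕ → X → ℂ} {k : ℕ} {p : X} {δ : ℂ}
    (hφ : ∀ m ≤ k + 1, φ m = φ' m) (hb : ∀ m ≤ k, b m = b' m)
    (h : transportCoeff B L φ b k p - transportCoeff B L φ' b' k p =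
      -((k + 1) * (k + 2) * δ)) :
    -2 * Complex.I * φ 1 p * (b (k + 1) p - b' (k + 1) p) =
      (k + 2) * (δ + Complex.I * (φ (k + 2) p - φ' (k + 2) p) * b 0 p) := by
  rw [transportCoeff_sub hφ hb] at h
  apply mul_left_cancel₀ (Nat.cast_add_one_ne_zero k : (k + 1 : ℂ) ≠ 0)
  linear_combination -h

end LeadingTerms

section Uniqueness

variable {φ φ' : ℕ → X → ℂ} {N : ℕ}

theorem eq_of_eikonalCoeff_eq (hφ₀ : φ 0 = φ' 0) (hφ₁ : φ 1 = φ' 1) (hne : ∀ p, φ 1 p ≠ 0)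
    (h : ∀ K < N, ∀ p, eikonalCoeff B φ K p = eikonalCoeff B φ' K p) :
    ∀ m ≤ N, φ m = φ' m := by
  intro m
  induction m using Nat.strong_induction_on with
  | _ m ih =>
    intro hm
    match m with
    | 0 => exact hφ₀
    | 1 => exact hφ₁
    | K + 2 =>
      funext p
      have leading : 2 * ((K : ℂ) + 2) * φ 1 p * (φ (K + 2) p - φ' (K + 2) p) = 0 := by
        rw [← eikonalCoeff_sub (B := B) (fun m _ => ih m (by omega) (by omega)),
          h (K + 1) (by omega), sub_self]
      have hK : (K : ℂ) + 2 ≠ 0 := by exact_mod_cast (K + 1).succ_ne_zero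
      simpa [hK, hne p, sub_eq_zero] using leading

theorem eq_of_transportCoeff_eq {b b' : ℕ → X → ℂ} (hne : ∀ p, φ 1 p ≠ 0)
    (hφ : ∀ m ≤ N + 1, φ m = φ' m) (hb₀ : b 0 = b' 0)
    (h : ∀ k < N, ∀ p, transportCoeff B L φ b k p = transportCoeff B L φ' b' k p) :
    ∀ m ≤ N, b m = b' m := by
  intro m
  induction m using Nat.strong_induction_on with
  | _ m ih =>
    intro hm
    match m with
    | 0 => exact hb₀
    | k + 1 =>
      funext p
      have leading : -2 * Complex.I * φ 1 p * (b (k + 1) p - b' (k + 1) p) = 0 := by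
        rw [neg_two_I_mul_sub_of_transportCoeff_sub (B := B) (L := L) (δ := 0)
          (fun m _ => hφ m (by omega)) (fun m _ => ih m (by omega) (by omega))
          (by rw [h k (by omega), sub_self, mul_zero, neg_zero]), hφ (k + 2) (by omega)]
        ring
      simpa [hne p, sub_eq_zero] using leading

end Uniqueness

section Amplitudes

variable {φ φ' : ℕ → X → ℂ} {ψ : X → ℂ} {a a' : ℕ → ℕ → X → ℂ} {N : ℕ}

/-- `a k j = a_{k,j}` are the amplitude coefficients along the phase `φ` with boundary value `ψ`:
they solve the transport recursion with `a_{0,0} = ψ` and `a_{0,j} = 0` for `j ≥ 1`. The convention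
`a_{k,−1} = 0` is encoded by the separate equation for `j = 0`. -/
structure IsAmplitude (B : ℕ → (X → ℂ) → (X → ℂ) → X → ℂ)
    (L : ℕ → ℕ → (X → ℂ) → (X → ℂ) → X → ℂ) (φ : ℕ → X → ℂ) (ψ : X → ℂ)
    (a : ℕ → ℕ → X → ℂ) : Prop where
  initial_zero : a 0 0 = ψ
  initial_pos : ∀ j, 1 ≤ j → a 0 j = 0
  transport_zero : ∀ k p, transportCoeff B L φ (a · 0) k p = 0
  transport_succ : ∀ j k p,
    transportCoeff B L φ (a · (j + 1)) k p = -laplaceCoeff L (a · j) k p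

theorem IsAmplitude.eq_of_phase_eq (ha : IsAmplitude B L φ ψ a) (ha' : IsAmplitude B L φ' ψ a')
    (hne : ∀ p, φ 1 p ≠ 0) (hφ : ∀ m ≤ N, φ m = φ' m) (j : ℕ) :
    ∀ k, k + j < N → a k j = a' k j := by
  induction j with
  | zero =>
    intro k hk
    exact eq_of_transportCoeff_eq (B := B) (L := L) (b := (a · 0)) (b' := (a' · 0)) hne
      (fun m _ => hφ m (by omega)) (ha.initial_zero.trans ha'.initial_zero.symm)
      (fun l _ p => (ha.transport_zero l p).trans (ha'.transport_zero l p).symm) k le_rfl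
  | succ j ih =>
    intro k hk
    refine eq_of_transportCoeff_eq (B := B) (L := L) (b := (a · (j + 1))) (b' := (a' · (j + 1)))
      hne (fun m _ => hφ m (by omega))
      ((ha.initial_pos _ j.succ_pos).trans (ha'.initial_pos _ j.succ_pos).symm)
      (fun l _ p => ?_) k le_rfl
    rw [ha.transport_succ, ha'.transport_succ, laplaceCoeff_congr fun m _ => ih m (by omega)]

theorem IsAmplitude.mul_sub_zero {k : ℕ} (ha : IsAmplitude B L φ ψ a)
    (ha' : IsAmplitude B L φ' ψ a') (hne : ∀ p, φ 1 p ≠ 0)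
    (hφ : ∀ m ≤ k + 1, φ m = φ' m) (p : X) :
    -2 * Complex.I * φ 1 p * (a (k + 1) 0 p - a' (k + 1) 0 p) =
      Complex.I * (k + 2) * ψ p * (φ (k + 2) p - φ' (k + 2) p) := by
  rw [neg_two_I_mul_sub_of_transportCoeff_sub (B := B) (L := L) (b := (a · 0)) (b' := (a' · 0))
    (δ := 0) hφ (fun m _ => ha.eq_of_phase_eq ha' hne hφ 0 m (by omega))
    (by rw [ha.transport_zero, ha'.transport_zero]; ring), ha.initial_zero]
  ring

theorem IsAmplitude.mul_sub_succ {k j : ℕ} (ha : IsAmplitude B L φ ψ a)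
    (ha' : IsAmplitude B L φ' ψ a') (hne : ∀ p, φ 1 p ≠ 0)
    (hφ : ∀ m ≤ k + j + 2, φ m = φ' m) (p : X) :
    -2 * Complex.I * φ 1 p * (a (k + 1) (j + 1) p - a' (k + 1) (j + 1) p) =
      (k + 2) * (a (k + 2) j p - a' (k + 2) j p) := by
  have lower := ha.eq_of_phase_eq ha' hne hφ
  have source : transportCoeff B L φ (a · (j + 1)) k p - transportCoeff B L φ' (a' · (j + 1)) k p =
      -((k + 1) * (k + 2) * (a (k + 2) j p - a' (k + 2) j p)) := by
    rw [ha.transport_succ, ha'.transport_succ,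
      ← laplaceCoeff_sub (L := L) (f := (a · j)) (g := (a' · j)) fun m _ => lower j m (by omega)]
    ring
  rw [neg_two_I_mul_sub_of_transportCoeff_sub (b := (a · (j + 1))) (b' := (a' · (j + 1)))
    (fun m _ => hφ m (by omega)) (fun m _ => lower (j + 1) m (by omega)) source,
    ha.initial_pos _ j.succ_pos, Pi.zero_apply, mul_zero, add_zero]

theorem IsAmplitude.sub_eq (ha : IsAmplitude B L φ ψ a) (ha' : IsAmplitude B L φ' ψ a')
    (hne : ∀ p, φ 1 p ≠ 0) (hφ : ∀ m ≤ N, φ m = φ' m) (p : X) (j : ℕ) :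
    ∀ k, k + 1 + j = N →
      a (k + 1) j p - a' (k + 1) j p = ((N.factorial : ℂ) / (k + 1).factorial) * ψ p *
        (eikonalCoeff B φ N p - eikonalCoeff B φ' N p) / (-2 * Complex.I * φ 1 p) ^ (j + 2) := by
  have hs : -2 * Complex.I * φ 1 p ≠ 0 := by simp [hne p]
  have hfac (k : ℕ) : (k.factorial : ℂ) ≠ 0 := by exact_mod_cast k.factorial_ne_zero
  induction j with
  | zero =>
    rintro k rfl
    rw [add_zero, eikonalCoeff_sub hφ, div_self (hfac _), eq_div_iff (pow_ne_zero _ hs)]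
    linear_combination (-2 * Complex.I * φ 1 p) * ha.mul_sub_zero ha' hne hφ p -
      2 * (k + 2) * φ 1 p * (φ (k + 2) p - φ' (k + 2) p) * ψ p * Complex.I_sq
  | succ j ih =>
    intro k hk
    have hk₂ : (k : ℂ) + 2 ≠ 0 := by exact_mod_cast (k + 1).succ_ne_zero
    have hfac_succ : ((k + 2).factorial : ℂ) = (k + 2) * (k + 1).factorial := by
      rw [Nat.factorial_succ]
      push_cast
      ring
    apply mul_left_cancel₀ hs
    rw [ha.mul_sub_succ ha' hne (fun m _ => hφ m (by omega)), ih (k + 1) (by omega), hfac_succ]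
    generalize -2 * Complex.I * φ 1 p = s at hs ⊢
    field_simp [hfac (k + 1)]
    ring

end Amplitudes

theorem statement_13_general {z : ℂ} {ν ν' : ℕ → X → ℂ} {ρ ψ : X → ℂ} {φ φ' : ℕ → X → ℂ}
    {a a' : ℕ → ℕ → X → ℂ} {k j : ℕ} (hk : 1 ≤ k) (hν : ∀ m < k + j, ν m = ν' m)
    (hρ : ∀ p, ρ p ≠ 0) (hφ₀ : φ 0 = φ' 0) (hφ₁ : φ 1 = ρ) (hφ'₁ : φ' 1 = ρ)
    (hφ : ∀ K p, eikonalCoeff B φ K p = z * ν K p)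
    (hφ' : ∀ K p, eikonalCoeff B φ' K p = z * ν' K p)
    (ha : IsAmplitude B L φ ψ a) (ha' : IsAmplitude B L φ' ψ a') (p : X) :
    a k j p - ((k + j).factorial : ℂ) / k.factorial * z * ψ p * ν (k + j) p /
        (-2 * Complex.I * ρ p) ^ (j + 2) =
      a' k j p - ((k + j).factorial : ℂ) / k.factorial * z * ψ p * ν' (k + j) p /
        (-2 * Complex.I * ρ p) ^ (j + 2) := by
  subst hφ₁
  have phase_eq : ∀ m ≤ k + j, φ m = φ' m :=
    eq_of_eikonalCoeff_eq (B := B) hφ₀ hφ'₁.symm hρ fun K hK p => by rw [hφ, hφ', hν K hK]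
  obtain ⟨k, rfl⟩ := Nat.exists_eq_add_of_le' hk
  have amplitude_sub := ha.sub_eq ha' hρ phase_eq p j k rfl
  rw [hφ, hφ'] at amplitude_sub
  linear_combination amplitude_sub

end FormalRecursion

section NormalCoordinates

variable {n : ℕ}
  {Rk : ℕ → EuclideanSpace ℝ (Fin n) → (EuclideanSpace ℝ (Fin n) →L[ℝ] EuclideanSpace ℝ (Fin n))}
  {qs : ℕ → EuclideanSpace ℝ (Fin n) → ℝ}
  {qf : ℕ → EuclideanSpace ℝ (Fin n) → EuclideanSpace ℝ (Fin n)}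
  {φ : ℕ → EuclideanSpace ℝ (Fin n) × EuclideanSpace ℝ (Fin n) → ℂ}
  {ψ : EuclideanSpace ℝ (Fin n) × EuclideanSpace ℝ (Fin n) → ℂ}
  {a : ℕ → ℕ → EuclideanSpace ℝ (Fin n) × EuclideanSpace ℝ (Fin n) → ℂ}

/-- The contribution `⟨R_ℓ∇·, ∇f⟩ + q_ℓ^♯ (ν+1) g + ⟨q_ℓ^♭, ∇f⟩` of the `ℓ`-th Taylor coefficients
of the Laplacian, with `f = f_ν` and `g = f_{ν+1}`; it turns `laplaceCoeff` into `phiDel`. -/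
def laplaceTaylor (n : ℕ)
    (Rk : ℕ → EuclideanSpace ℝ (Fin n) → (EuclideanSpace ℝ (Fin n) →L[ℝ] EuclideanSpace ℝ (Fin n)))
    (qs : ℕ → EuclideanSpace ℝ (Fin n) → ℝ)
    (qf : ℕ → EuclideanSpace ℝ (Fin n) → EuclideanSpace ℝ (Fin n)) (ℓ ν : ℕ)
    (f g : EuclideanSpace ℝ (Fin n) × EuclideanSpace ℝ (Fin n) → ℂ)
    (p : EuclideanSpace ℝ (Fin n) × EuclideanSpace ℝ (Fin n)) : ℂ :=
  TrR n (Rk ℓ) f p + ((qs ℓ p.1 : ℝ) : ℂ) * ((ν + 1 : ℕ) : ℂ) * g p + Dx n f p (qf ℓ p.1)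

theorem EikonalRec.eikonalCoeff_eq {nk : ℕ → EuclideanSpace ℝ (Fin n) → ℝ} {z : ℂ}
    (h : EikonalRec n Rk nk z φ) (K : ℕ) (p : EuclideanSpace ℝ (Fin n) × EuclideanSpace ℝ (Fin n)) :
    eikonalCoeff (fun ℓ => RPair n (Rk ℓ)) φ K p = z * nk K p.1 :=
  h K p

theorem TransportRec.isAmplitude (h : TransportRec n Rk qs qf φ a) (h₀ : a 0 0 = ψ)
    (hpos : ∀ j, 1 ≤ j → a 0 j = 0) :
    IsAmplitude (fun ℓ => RPair n (Rk ℓ)) (laplaceTaylor n Rk qs qf) φ ψ a where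
  initial_zero := h₀
  initial_pos := hpos
  transport_zero k p := (h 0 k p).trans (if_pos rfl)
  transport_succ j k p := (h (j + 1) k p).trans (if_neg j.succ_ne_zero)

theorem ssqrt_ne_zero {w : ℂ} (hw : w ≠ 0) : ssqrt w ≠ 0 := by
  have hcpow : w ^ (1 / 2 : ℂ) ≠ 0 := Complex.cpow_ne_zero_iff.mpr (Or.inl hw)
  unfold ssqrt
  split_ifs
  exacts [hcpow, neg_ne_zero.mpr hcpow]

theorem Zall.neg_mem_slitPlane {z : ℂ} (hz : Zall z) : -z ∈ Complex.slitPlane := by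
  rw [Complex.mem_slitPlane_iff, Complex.neg_re, Complex.neg_im, neg_pos, neg_ne_zero]
  rcases hz with ⟨-, him, -⟩ | ⟨hre, -⟩ | ⟨-, him⟩
  · exact Or.inr (abs_pos.mp him)
  · exact Or.inl (by linarith)
  · exact Or.inr (abs_pos.mp (by linarith))

theorem rho_ne_zero
    {R₀ : EuclideanSpace ℝ (Fin n) → (EuclideanSpace ℝ (Fin n) →L[ℝ] EuclideanSpace ℝ (Fin n))}
    {n₀ : EuclideanSpace ℝ (Fin n) → ℝ} {z : ℂ} (hz : -z ∈ Complex.slitPlane)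
    {p : EuclideanSpace ℝ (Fin n) × EuclideanSpace ℝ (Fin n)}
    (hR₀ : 0 ≤ inner ℝ (R₀ p.1 p.2) p.2) (hn₀ : 0 < n₀ p.1) : rho n R₀ n₀ z p ≠ 0 := by
  refine ssqrt_ne_zero fun h => ?_
  have hre : -inner ℝ (R₀ p.1 p.2) p.2 + z.re * n₀ p.1 = 0 := by
    simpa using congrArg Complex.re h
  have him : z.im * n₀ p.1 = 0 := by simpa using congrArg Complex.im h
  rcases Complex.mem_slitPlane_iff.mp hz with hz | hz
  · rw [Complex.neg_re, neg_pos] at hz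
    nlinarith
  · exact hz (by simpa [hn₀.ne'] using him)

end NormalCoordinates

/-- **Lemma 3.6.** For all integers `k ≥ 1`, `j ≥ 0`, the function
`a_{k,j} − ((k+j)!/k!) zψ n_{k+j}/(−2iρ)^{j+2}` is independent of all `n_ℓ` with
`ℓ ≥ k+j`: if two refraction indices have the same boundary Taylor coefficients `n_m`
for `m < k+j`, then the corresponding amplitude coefficients satisfy
`a_{k,j} − ((k+j)!/k!) zψ n_{k+j}/(−2iρ)^{j+2}
  = a'_{k,j} − ((k+j)!/k!) zψ n'_{k+j}/(−2iρ)^{j+2}`. -/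
theorem statement_13 (n : ℕ) (hn : 0 < n)
    (Rk : ℕ → EuclideanSpace ℝ (Fin n) →
      (EuclideanSpace ℝ (Fin n) →L[ℝ] EuclideanSpace ℝ (Fin n)))
    (hRk : ∀ ℓ, ContDiff ℝ (⊤ : ℕ∞) (Rk ℓ))
    (hR₀ell : ∃ c : ℝ, 0 < c ∧ ∀ x ξ, c * ‖ξ‖ ^ 2 ≤ (inner ℝ (Rk 0 x ξ) ξ : ℝ))
    (qs : ℕ → EuclideanSpace ℝ (Fin n) → ℝ) (hqs : ∀ ℓ, ContDiff ℝ (⊤ : ℕ∞) (qs ℓ))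
    (qf : ℕ → EuclideanSpace ℝ (Fin n) → EuclideanSpace ℝ (Fin n))
    (hqf : ∀ ℓ, ContDiff ℝ (⊤ : ℕ∞) (qf ℓ))
    (z : ℂ) (hz : Zall z)
    -- two refraction indices with the same boundary Taylor coefficients below k+j
    (nk nk' : ℕ → EuclideanSpace ℝ (Fin n) → ℝ)
    (hnk : ∀ m, ContDiff ℝ (⊤ : ℕ∞) (nk m)) (hnk' : ∀ m, ContDiff ℝ (⊤ : ℕ∞) (nk' m))
    (hn₀pos : ∃ c : ℝ, 0 < c ∧ ∀ x, c ≤ nk 0 x)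
    (k j : ℕ) (hk : 1 ≤ k)
    (hagree : ∀ m < k + j, nk m = nk' m)
    -- the corresponding phase coefficients
    (φ φ' : ℕ → (EuclideanSpace ℝ (Fin n)) × (EuclideanSpace ℝ (Fin n)) → ℂ)
    (hφsmooth : ∀ m, ContDiff ℝ (⊤ : ℕ∞) (φ m)) (hφ'smooth : ∀ m, ContDiff ℝ (⊤ : ℕ∞) (φ' m))
    (hφ0 : φ 0 = fun p => -((inner ℝ p.1 p.2 : ℝ) : ℂ))
    (hφ'0 : φ' 0 = fun p => -((inner ℝ p.1 p.2 : ℝ) : ℂ))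
    (hφ1 : φ 1 = rho n (Rk 0) (nk 0) z) (hφ'1 : φ' 1 = rho n (Rk 0) (nk' 0) z)
    (hφrec : EikonalRec n Rk nk z φ) (hφ'rec : EikonalRec n Rk nk' z φ')
    -- the boundary cutoff ψ and the corresponding amplitude coefficients
    (ψb : EuclideanSpace ℝ (Fin n) → ℂ) (hψb : ContDiff ℝ (⊤ : ℕ∞) ψb)
    (hψbsupp : HasCompactSupport ψb)
    (a a' : ℕ → ℕ → (EuclideanSpace ℝ (Fin n)) × (EuclideanSpace ℝ (Fin n)) → ℂ)
    (hasmooth : ∀ k' j', ContDiff ℝ (⊤ : ℕ∞) (a k' j'))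
    (ha'smooth : ∀ k' j', ContDiff ℝ (⊤ : ℕ∞) (a' k' j'))
    (ha00 : a 0 0 = fun p => ψb p.1) (ha'00 : a' 0 0 = fun p => ψb p.1)
    (ha0j : ∀ j' : ℕ, 1 ≤ j' → a 0 j' = 0) (ha'0j : ∀ j' : ℕ, 1 ≤ j' → a' 0 j' = 0)
    (harec : TransportRec n Rk qs qf φ a) (ha'rec : TransportRec n Rk qs qf φ' a') :
    ∀ p, a k j p - (((k + j).factorial : ℂ) / (k.factorial : ℂ)) * z * ψb p.1 *
        (nk (k + j) p.1 : ℂ) / (-2 * Complex.I * rho n (Rk 0) (nk 0) z p) ^ (j + 2) =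
      a' k j p - (((k + j).factorial : ℂ) / (k.factorial : ℂ)) * z * ψb p.1 *
        (nk' (k + j) p.1 : ℂ) / (-2 * Complex.I * rho n (Rk 0) (nk 0) z p) ^ (j + 2) := by
  obtain ⟨c, hc, hcn⟩ := hn₀pos
  obtain ⟨d, hd, hdR⟩ := hR₀ell
  have rho_ne (p) : rho n (Rk 0) (nk 0) z p ≠ 0 := rho_ne_zero hz.neg_mem_slitPlane
    ((by positivity : 0 ≤ d * ‖p.2‖ ^ 2).trans (hdR p.1 p.2)) (hc.trans_le (hcn p.1))
  intro p
  exact statement_13_general (ν := fun m p => (nk m p.1 : ℂ)) (ν' := fun m p => (nk' m p.1 : ℂ)) hk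
    (fun m hm => by rw [hagree m hm]) rho_ne (hφ0.trans hφ'0.symm) hφ1
    (by rw [hφ'1, hagree 0 (by omega)]) hφrec.eikonalCoeff_eq
    hφ'rec.eikonalCoeff_eq (harec.isAmplitude ha00 ha0j) (ha'rec.isAmplitude ha'00 ha'0j) p

end
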